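/- arXiv:2307.14546 — 4 statements merged into one kernel-verified Lean document; each statement's English description precedes it below -/
import Mathlib

section
/- For all complex numbers p, q, a, b (with real parts p_R, q_R, a_R, b_R and imaginary parts p_I, q_I, a_I, b_I) and every natural number m, ∫₀^{2π} exp(p·cos x + q·sin x)·sin(a·cos x + b·sin x − m·x) dx = i·π·[ (A₁ + i·B₁)^m · S_m(C₁ + i·D₁) − (A₂ + i·B₂)^m · S_m(C₂ + i·D₂) ], where A₁ = (p_R + a_I − q_I + b_R)/2, A₂ = (p_R − a_I + q_I + b_R)/2, B₁ = (p_I − a_R + q_R + b_I)/2, B₂ = (p_I + a_R − q_R + b_I)/2, C₁ = ((p_R+a_I)² + (q_R+b_I)² − (p_I−a_R)² − (q_I−b_R)²)/4, C₂ = ((p_R−a_I)² + (q_R−b_I)² − (p_I+a_R)² − (q_I+b_R)²)/4, D₁ = ((p_I−a_R)(p_R+a_I) + (q_I−b_R)(q_R+b_I))/2, and D₂ = ((p_I+a_R)(p_R−a_I) + (q_I+b_R)(q_R−b_I))/2. -/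
open scoped Real

/-- `S m z = ∑_{k=0}^∞ z^k / (k! (m+k)!)`, i.e. `₀F₁(; m+1; z) / m!`. -/
noncomputable def S (m : ℕ) (z : ℂ) : ℂ :=
  ∑' k : ℕ, z ^ k / ((k.factorial : ℂ) * ((m + k).factorial : ℂ))

lemma aux_series (w s : ℂ) (hs : s = Complex.I ∨ s = -Complex.I) (g : ℝ → ℂ) (hg : Continuous g) :
    HasSum (fun k : ℕ => w ^ k / (k.factorial : ℂ) *
        ∫ x : ℝ in (0:ℝ)..(2 * π), Complex.exp (s * k * x) * g x)
      (∫ x : ℝ in (0:ℝ)..(2 * π), Complex.exp (w * Complex.exp (s * x)) * g x) := by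
  have hn : ∀ x : ℝ, ‖Complex.exp (s * x)‖ = 1 := by
    intro x
    rw [Complex.norm_exp]
    rcases hs with rfl | rfl <;> simp
  simp_rw [← intervalIntegral.integral_const_mul]
  apply intervalIntegral.hasSum_integral_of_dominated_convergence
    (fun (k : ℕ) (x : ℝ) => ‖w‖ ^ k / k.factorial * ‖g x‖)
  · intro k
    apply Continuous.aestronglyMeasurable
    fun_prop
  · intro k
    refine Filter.Eventually.of_forall fun x _ => ?_
    have : Complex.exp (s * k * x) = Complex.exp (s * x) ^ k := by
      rw [← Complex.exp_nat_mul]; congr 1; ring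
    rw [this]
    simp [hn]
  · refine Filter.Eventually.of_forall fun x _ => ?_
    exact (Real.summable_pow_div_factorial ‖w‖).mul_right _
  · simp_rw [tsum_mul_right]
    apply Continuous.intervalIntegrable
    fun_prop
  · refine Filter.Eventually.of_forall fun x _ => ?_
    have h := (NormedSpace.expSeries_div_hasSum_exp (w * Complex.exp (s * x))).mul_right (g x)
    rw [← Complex.exp_eq_exp_ℂ] at h
    refine Eq.mp (congrArg (fun f => HasSum f _) ?_) h
    funext k
    have : Complex.exp (s * k * x) = Complex.exp (s * x) ^ k := by
      rw [← Complex.exp_nat_mul]; congr 1; ring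
    rw [this, mul_pow]; ring

lemma aux_orth (n : ℤ) (hn : n ≠ 0) :
    (∫ x : ℝ in (0:ℝ)..(2 * π), Complex.exp (Complex.I * n * x)) = 0 := by
  have hc : Complex.I * (n : ℂ) ≠ 0 := by simp [hn]
  rw [integral_exp_mul_complex hc]
  have : Complex.exp (Complex.I * n * ((2 * π : ℝ) : ℂ)) = 1 := by
    rw [Complex.exp_eq_one_iff]
    exact ⟨n, by push_cast; ring⟩
  rw [this]; simp

lemma aux_inner (v : ℂ) (n : ℕ) :
    (∫ x : ℝ in (0:ℝ)..(2 * π), Complex.exp (v * Complex.exp (-Complex.I * x)) *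
      Complex.exp (Complex.I * n * x)) = 2 * π * (v ^ n / (n.factorial : ℂ)) := by
  have h := aux_series v (-Complex.I) (Or.inr rfl) (fun x => Complex.exp (Complex.I * n * x))
    (by fun_prop)
  refine h.unique ?_
  have h0 : ∀ k : ℕ, (∫ x : ℝ in (0:ℝ)..(2 * π), Complex.exp (-Complex.I * k * x) *
      Complex.exp (Complex.I * n * x)) = if k = n then 2 * (π : ℂ) else 0 := by
    intro k
    have e : ∀ x : ℝ, Complex.exp (-Complex.I * k * x) * Complex.exp (Complex.I * n * x)
        = Complex.exp (Complex.I * ((n - k : ℤ) : ℂ) * x) := by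
      intro x; rw [← Complex.exp_add]; congr 1; push_cast; ring
    simp_rw [e]
    split_ifs with hk
    · subst hk; simp
    · exact aux_orth _ (by omega)
  simp_rw [h0]
  convert hasSum_ite_eq n (2 * π * (v ^ n / (n.factorial : ℂ))) using 2 with k
  split_ifs with hk
  · subst hk; ring
  · simp

lemma aux_main (u v : ℂ) (m : ℕ) :
    (∫ x : ℝ in (0:ℝ)..(2 * π), Complex.exp (u * Complex.exp (Complex.I * x)) *
      (Complex.exp (v * Complex.exp (-Complex.I * x)) *
      Complex.exp (Complex.I * m * x))) = 2 * π * (v ^ m * S m (u * v)) := by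
  have h := aux_series u Complex.I (Or.inl rfl)
    (fun x => Complex.exp (v * Complex.exp (-Complex.I * x)) * Complex.exp (Complex.I * m * x))
    (by fun_prop)
  rw [← h.tsum_eq, S, ← tsum_mul_left, ← tsum_mul_left]
  congr 1
  funext k
  have e : ∀ x : ℝ, Complex.exp (Complex.I * k * x) *
      (Complex.exp (v * Complex.exp (-Complex.I * x)) * Complex.exp (Complex.I * m * x))
      = Complex.exp (v * Complex.exp (-Complex.I * x)) *
        Complex.exp (Complex.I * ((m + k : ℕ) : ℂ) * x) := by
    intro x
    rw [mul_left_comm, ← Complex.exp_add]; congr 2; push_cast; ring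
  simp_rw [e]
  rw [aux_inner]
  have := Nat.factorial_ne_zero k
  have := Nat.factorial_ne_zero (m + k)
  field_simp
  ring

lemma aux_pos (P Q : ℂ) (m : ℕ) :
    (∫ x : ℝ in (0:ℝ)..(2 * π), Complex.exp (P * Complex.cos x + Q * Complex.sin x
      + Complex.I * m * x)) =
      2 * π * (((P + Complex.I * Q) / 2) ^ m * S m ((P ^ 2 + Q ^ 2) / 4)) := by
  have h := aux_main ((P - Complex.I * Q) / 2) ((P + Complex.I * Q) / 2) m
  have e : (P - Complex.I * Q) / 2 * ((P + Complex.I * Q) / 2) = (P ^ 2 + Q ^ 2) / 4 := by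
    linear_combination (-Q ^ 2 / 4) * Complex.I_sq
  rw [e] at h
  rw [← h]
  congr 1
  funext x
  rw [← Complex.exp_add, ← Complex.exp_add]
  congr 1
  rw [Complex.cos, Complex.sin, mul_comm Complex.I (x : ℂ),
    show -Complex.I * (x : ℂ) = -(x : ℂ) * Complex.I by ring]
  ring

lemma aux_neg (P Q : ℂ) (m : ℕ) :
    (∫ x : ℝ in (0:ℝ)..(2 * π), Complex.exp (P * Complex.cos x + Q * Complex.sin x
      - Complex.I * m * x)) =
      2 * π * (((P - Complex.I * Q) / 2) ^ m * S m ((P ^ 2 + Q ^ 2) / 4)) := by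
  have h := aux_pos P (-Q) m
  rw [neg_sq, mul_neg, ← sub_eq_add_neg] at h
  rw [← h]
  have h2 := intervalIntegral.integral_comp_sub_left (a := (0:ℝ)) (b := 2 * π)
    (fun x : ℝ => Complex.exp (P * Complex.cos x + Q * Complex.sin x - Complex.I * m * x)) (2 * π)
  rw [sub_self, sub_zero] at h2
  rw [← h2]
  congr 1
  funext x
  push_cast
  rw [Complex.cos_two_pi_sub, Complex.sin_two_pi_sub, Complex.exp_eq_exp_iff_exists_int]
  exact ⟨-m, by push_cast; ring⟩

theorem gr_3937_1_complex_params (p q a b : ℂ) (m : ℕ) :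
    (∫ x : ℝ in (0:ℝ)..(2 * π),
        Complex.exp (p * Complex.cos x + q * Complex.sin x) *
          Complex.sin (a * Complex.cos x + b * Complex.sin x - m * x)) =
      Complex.I * (π : ℂ) *
        ((((p.re + a.im - q.im + b.re) / 2 : ℂ) +
              Complex.I * ((p.im - a.re + q.re + b.im) / 2 : ℂ)) ^ m *
            S m ((((p.re + a.im)^2 + (q.re + b.im)^2 - (p.im - a.re)^2 - (q.im - b.re)^2) / 4 : ℂ) +
              Complex.I * (((p.im - a.re) * (p.re + a.im) + (q.im - b.re) * (q.re + b.im)) / 2 : ℂ)) -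
          (((p.re - a.im + q.im + b.re) / 2 : ℂ) +
              Complex.I * ((p.im + a.re - q.re + b.im) / 2 : ℂ)) ^ m *
            S m ((((p.re - a.im)^2 + (q.re - b.im)^2 - (p.im + a.re)^2 - (q.im + b.re)^2) / 4 : ℂ) +
              Complex.I * (((p.im + a.re) * (p.re - a.im) + (q.im + b.re) * (q.re - b.im)) / 2 : ℂ))) := by
  have e : ∀ x : ℝ, Complex.exp (p * Complex.cos x + q * Complex.sin x) *
          Complex.sin (a * Complex.cos x + b * Complex.sin x - m * x) =
      Complex.I / 2 * (Complex.exp ((p - Complex.I * a) * Complex.cos x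
        + (q - Complex.I * b) * Complex.sin x + Complex.I * m * x) -
        Complex.exp ((p + Complex.I * a) * Complex.cos x
        + (q + Complex.I * b) * Complex.sin x - Complex.I * m * x)) := by
    intro x
    rw [Complex.sin.eq_1 (a * Complex.cos x + b * Complex.sin x - m * x)]
    rw [show (p - Complex.I * a) * Complex.cos x
        + (q - Complex.I * b) * Complex.sin x + Complex.I * m * x =
        (p * Complex.cos x + q * Complex.sin x) +
        -(a * Complex.cos x + b * Complex.sin x - m * x) * Complex.I by ring,
      show (p + Complex.I * a) * Complex.cos x
        + (q + Complex.I * b) * Complex.sin x - Complex.I * m * x =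
        (p * Complex.cos x + q * Complex.sin x) +
        (a * Complex.cos x + b * Complex.sin x - m * x) * Complex.I by ring,
      Complex.exp_add (p * Complex.cos x + q * Complex.sin x),
      Complex.exp_add (p * Complex.cos x + q * Complex.sin x)]
    ring
  simp_rw [e]
  rw [intervalIntegral.integral_const_mul, intervalIntegral.integral_sub
    (Continuous.intervalIntegrable (by fun_prop) _ _)
    (Continuous.intervalIntegrable (by fun_prop) _ _), aux_pos, aux_neg]
  have I2 := Complex.I_sq
  obtain ⟨pr, pi⟩ := p
  obtain ⟨qr, qi⟩ := q
  obtain ⟨ar, ai⟩ := a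
  obtain ⟨br, bi⟩ := b
  rw [show ∀ A B : ℂ, Complex.I / 2 * (2 * π * A - 2 * π * B) = Complex.I * π * (A - B) by
    intros; ring]
  congr 5 <;> (apply Complex.ext <;> simp [pow_two] <;> ring)
end

section
/- Let p, q, a, b be real numbers, set X = ((p+b) + i·(a−q))/2 and Y = ((p−b) + i·(a+q))/2, and suppose Y ≠ 0. Define F₁ : arg X + arg(conj Y) ∉ (−π, π]; F₂ : arg X + arg Y ∉ (−π, π]; F₃ : arg Y + arg(conj Y) ∉ (−π, π]. Define K = q/a if |a| ≥ |q| and a ≠ 0; K = a/q if |q| ≥ |a| and q ≠ 0; and K = −1 if a = q = 0 (these clauses agree on their overlap). Then at least one of F₁, F₂, F₃ holds if and only if either p < −b·K, or [ (a < −|q| or q > |a|) and p = −b·K ]. -/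
open scoped Real ComplexConjugate

lemma aux_sin (z w : ℂ) : ‖z‖ * ‖w‖ * Real.sin (z.arg + w.arg) = z.re * w.im + z.im * w.re := by
  rw [Real.sin_add]
  have h1 := Complex.norm_mul_cos_arg z
  have h2 := Complex.norm_mul_cos_arg w
  have h3 := Complex.norm_mul_sin_arg z
  have h4 := Complex.norm_mul_sin_arg w
  rw [← h1, ← h2, ← h3, ← h4]
  ring

lemma aux_argpos {z : ℂ} (hz : 0 < z.im) : 0 < z.arg ∧ z.arg < π := by
  refine ⟨lt_of_le_of_ne (Complex.arg_nonneg_iff.2 hz.le) ?_, ?_⟩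
  · intro h
    have := Complex.arg_eq_zero_iff.1 h.symm
    linarith [this.2]
  · refine lt_of_le_of_ne (Complex.arg_le_pi z) ?_
    intro h
    have := Complex.arg_eq_pi_iff.1 h
    linarith [this.2]

lemma aux_argneg {z : ℂ} (hz : z.im < 0) : -π < z.arg ∧ z.arg < 0 :=
  ⟨Complex.neg_pi_lt_arg z, Complex.arg_neg_iff.2 hz⟩

lemma aux_ne {z : ℂ} (hz : z.im ≠ 0) : 0 < ‖z‖ := by
  rw [norm_pos_iff]
  rintro rfl
  simp at hz

lemma aux_P {z w : ℂ} (hz : 0 < z.im) (hw : 0 < w.im) :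
    z.arg + w.arg ∉ Set.Ioc (-π) π ↔ z.re * w.im + z.im * w.re < 0 := by
  have hz' := aux_argpos hz
  have hw' := aux_argpos hw
  have hn := mul_pos (aux_ne hz.ne') (aux_ne hw.ne')
  rw [← aux_sin, Set.mem_Ioc]
  constructor
  · intro h
    have h1 : π < z.arg + w.arg := by
      by_contra h2
      exact h ⟨by linarith, by linarith⟩
    have : 0 < Real.sin (z.arg + w.arg - π) :=
      Real.sin_pos_of_pos_of_lt_pi (by linarith) (by linarith)
    rw [Real.sin_sub_pi] at this
    nlinarith
  · rintro h ⟨_, h2⟩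
    have : 0 ≤ Real.sin (z.arg + w.arg) :=
      Real.sin_nonneg_of_nonneg_of_le_pi (by linarith) (by linarith)
    nlinarith

lemma aux_N {z w : ℂ} (hz : z.im < 0) (hw : w.im < 0) :
    z.arg + w.arg ∉ Set.Ioc (-π) π ↔ 0 ≤ z.re * w.im + z.im * w.re := by
  have hz' := aux_argneg hz
  have hw' := aux_argneg hw
  have hn := mul_pos (aux_ne hz.ne) (aux_ne hw.ne)
  rw [← aux_sin, Set.mem_Ioc]
  constructor
  · intro h
    have h1 : z.arg + w.arg ≤ -π := by
      by_contra h2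
      exact h ⟨by linarith, by linarith [Real.pi_pos]⟩
    have : Real.sin (z.arg + w.arg + π) ≤ 0 :=
      Real.sin_nonpos_of_nonpos_of_neg_pi_le (by linarith) (by linarith)
    rw [Real.sin_add_pi] at this
    nlinarith
  · rintro h ⟨h1, h2⟩
    have : Real.sin (z.arg + w.arg) < 0 :=
      Real.sin_neg_of_neg_of_neg_pi_lt (by linarith) (by linarith)
    nlinarith

lemma aux_O {z w : ℂ} (hz : 0 < z.im) (hw : w.im < 0) :
    (z.arg + w.arg ∉ Set.Ioc (-π) π ↔ False) ∧ (w.arg + z.arg ∉ Set.Ioc (-π) π ↔ False) := by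
  have hz' := aux_argpos hz
  have hw' := aux_argneg hw
  constructor <;> simp only [iff_false, not_not, Set.mem_Ioc] <;> constructor <;> linarith

lemma aux_main_s10 (p q a b : ℝ) (X Y W : ℂ) (hXr : X.re = (p + b) / 2) (hXi : X.im = (a - q) / 2)
    (hYr : Y.re = (p - b) / 2) (hYi : Y.im = (a + q) / 2)
    (hWr : W.re = (p - b) / 2) (hWi : W.im = -(a + q) / 2)
    (hW : W.arg = if Y.arg = π then π else -Y.arg)
    (hY : Y ≠ 0) (K : ℝ)
    (hK1 : |a| ≥ |q| → a ≠ 0 → K = q / a)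
    (hK2 : |q| ≥ |a| → q ≠ 0 → K = a / q)
    (hK3 : a = 0 → q = 0 → K = -1) :
    (X.arg + W.arg ∉ Set.Ioc (-π) π ∨ X.arg + Y.arg ∉ Set.Ioc (-π) π ∨
      Y.arg + W.arg ∉ Set.Ioc (-π) π) ↔
      (p < -(b * K) ∨ ((a < -|q| ∨ q > |a|) ∧ p = -(b * K))) := by
  have hpi := Real.pi_pos
  rcases eq_or_ne (a + q) 0 with hy | hy
  · obtain rfl : q = -a := by linarith
    have hK : K = -1 := by
      by_cases h : a = 0
      · exact hK3 h (by simp [h])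
      · rw [hK1 (by simp) h]; field_simp
    subst hK
    have hno : ¬ (a < -|(-a)| ∨ -a > |a|) := by
      rw [abs_neg]
      rintro (h | h)
      · linarith [neg_abs_le a]
      · linarith [neg_abs_le a]
    simp only [hno, false_and, or_false]
    have hYi0 : Y.im = 0 := by rw [hYi]; ring
    rcases lt_trichotomy p b with h | h | h
    · have : Y.arg = π := Complex.arg_eq_pi_iff.2 ⟨by linarith, hYi0⟩
      rw [hW, this]
      simp only [if_true]
      refine iff_of_true (Or.inr (Or.inr ?_)) (by linarith)
      rintro ⟨_, h2⟩
      linarith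
    · exact absurd (Complex.ext (by rw [hYr, h]; simp) (by rw [hYi0]; simp)) hY
    · have : Y.arg = 0 := Complex.arg_eq_zero_iff.2 ⟨by linarith, hYi0⟩
      rw [hW, this, if_neg hpi.ne]
      have := Complex.arg_le_pi X
      have := Complex.neg_pi_lt_arg X
      refine iff_of_false ?_ (by linarith)
      simp [*, hpi.le]
  rcases eq_or_ne a q with hx | hx
  · subst hx
    have ha : a ≠ 0 := by rintro rfl; simp at hy
    have hK : K = 1 := by rw [hK1 le_rfl ha]; field_simp
    subst hK
    have hno : ¬ (a < -|a| ∨ a > |a|) := by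
      rintro (h | h)
      · linarith [neg_abs_le a]
      · linarith [le_abs_self a]
    simp only [hno, false_and, or_false]
    have hXi0 : X.im = 0 := by rw [hXi]; ring
    have hYp : Y.arg ≠ π := by
      intro h
      have := (Complex.arg_eq_pi_iff.1 h).2
      apply hy; linarith
    have hY0 : Y.arg ≠ 0 := by
      intro h
      have := (Complex.arg_eq_zero_iff.1 h).2
      apply hy; linarith
    have h1 := lt_of_le_of_ne (Complex.arg_le_pi Y) hYp
    have h2 := Complex.neg_pi_lt_arg Y
    rw [hW, if_neg hYp]
    rcases lt_or_ge (p + b) 0 with h | h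
    · have : X.arg = π := Complex.arg_eq_pi_iff.2 ⟨by linarith, hXi0⟩
      rw [this]
      refine iff_of_true ?_ (by linarith)
      rcases lt_or_gt_of_ne hY0 with h | h
      · left; rintro ⟨_, h⟩; linarith
      · right; left; rintro ⟨_, h⟩; linarith
    · have : X.arg = 0 := Complex.arg_eq_zero_iff.2 ⟨by linarith, hXi0⟩
      rw [this]
      refine iff_of_false ?_ (by linarith)
      rintro (h | h | h) <;> apply h <;> constructor <;> linarith
  have key : ∀ c d : ℝ, c ≠ 0 → c * (p + b * (d / c)) = c * p + b * d := by
    intro c d hc; field_simp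
  rcases lt_or_gt_of_ne hx with hx | hx <;> rcases lt_or_gt_of_ne hy with hy | hy
  · -- a < q, a + q < 0
    have hlt : |q| < -a := abs_lt.2 ⟨by linarith, by linarith⟩
    have ha : a < 0 := by linarith [abs_nonneg q]
    have hK := hK1 (by rw [abs_of_neg ha]; exact hlt.le) ha.ne
    have k := key a q ha.ne
    rw [← hK] at k
    rw [(aux_O (z := W) (w := X) (by linarith) (by linarith)).2,
      (aux_O (z := W) (w := Y) (by linarith) (by linarith)).2,
      aux_N (by linarith) (by linarith), hXr, hXi, hYr, hYi]
    have e : (p + b) / 2 * ((a + q) / 2) + (a - q) / 2 * ((p - b) / 2) = a * (p + b * K) / 2 := by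
      rw [k]; ring
    rw [e]
    have h1 : a < -|q| := by linarith
    simp only [h1, true_or, true_and, false_or, or_false]
    rw [← le_iff_lt_or_eq]
    constructor <;> intro h <;> nlinarith
  · -- a < q, a + q > 0
    have hlt : |a| < q := abs_lt.2 ⟨by linarith, by linarith⟩
    have ha : 0 < q := by linarith [abs_nonneg a]
    have hK := hK2 (by rw [abs_of_pos ha]; exact hlt.le) ha.ne'
    have k := key q a ha.ne'
    rw [← hK] at k
    rw [(aux_O (z := Y) (w := X) (by linarith) (by linarith)).2,
      (aux_O (z := Y) (w := W) (by linarith) (by linarith)).1,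
      aux_N (by linarith) (by linarith), hXr, hXi, hWr, hWi]
    have e : (p + b) / 2 * (-(a + q) / 2) + (a - q) / 2 * ((p - b) / 2)
        = -(q * (p + b * K)) / 2 := by
      rw [k]; ring
    rw [e]
    have h1 : q > |a| := hlt
    simp only [h1, or_true, true_and, false_or, or_false]
    rw [← le_iff_lt_or_eq]
    constructor <;> intro h <;> nlinarith
  · -- a > q, a + q < 0
    have hlt : |a| < -q := abs_lt.2 ⟨by linarith, by linarith⟩
    have ha : q < 0 := by linarith [abs_nonneg a]
    have hK := hK2 (by rw [abs_of_neg ha]; exact hlt.le) ha.ne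
    have k := key q a ha.ne
    rw [← hK] at k
    rw [(aux_O (z := X) (w := Y) (by linarith) (by linarith)).1,
      (aux_O (z := W) (w := Y) (by linarith) (by linarith)).2,
      aux_P (by linarith) (by linarith), hXr, hXi, hWr, hWi]
    have e : (p + b) / 2 * (-(a + q) / 2) + (a - q) / 2 * ((p - b) / 2)
        = -(q * (p + b * K)) / 2 := by
      rw [k]; ring
    rw [e]
    have h1 : ¬ (a < -|q| ∨ q > |a|) := by
      rintro (h | h)
      · rw [abs_of_neg ha] at h; linarith
      · linarith [abs_nonneg a]
    simp only [h1, false_and, or_false]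
    constructor <;> intro h <;> nlinarith
  · -- a > q, a + q > 0
    have hlt : |q| < a := abs_lt.2 ⟨by linarith, by linarith⟩
    have ha : 0 < a := by linarith [abs_nonneg q]
    have hK := hK1 (by rw [abs_of_pos ha]; exact hlt.le) ha.ne'
    have k := key a q ha.ne'
    rw [← hK] at k
    rw [(aux_O (z := X) (w := W) (by linarith) (by linarith)).1,
      (aux_O (z := Y) (w := W) (by linarith) (by linarith)).1,
      aux_P (by linarith) (by linarith), hXr, hXi, hYr, hYi]
    have e : (p + b) / 2 * ((a + q) / 2) + (a - q) / 2 * ((p - b) / 2) = a * (p + b * K) / 2 := by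
      rw [k]; ring
    rw [e]
    have h1 : ¬ (a < -|q| ∨ q > |a|) := by
      rintro (h | h)
      · linarith [abs_nonneg q]
      · rw [abs_of_pos ha] at h; linarith
    simp only [h1, false_and, false_or, or_false]
    constructor <;> intro h <;> nlinarith

theorem overall_sign_flip_conditions (p q a b : ℝ)
    (hY : (((p : ℂ) - b + Complex.I * (a + q)) / 2) ≠ 0)
    (F1 F2 F3 : Prop)
    (hF1 : F1 ↔ ((((p : ℂ) + b + Complex.I * (a - q)) / 2).arg +
        (conj ((((p : ℂ) - b + Complex.I * (a + q)) / 2))).arg ∉ Set.Ioc (-π) π))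
    (hF2 : F2 ↔ ((((p : ℂ) + b + Complex.I * (a - q)) / 2).arg +
        ((((p : ℂ) - b + Complex.I * (a + q)) / 2)).arg ∉ Set.Ioc (-π) π))
    (hF3 : F3 ↔ ((((p : ℂ) - b + Complex.I * (a + q)) / 2).arg +
        (conj ((((p : ℂ) - b + Complex.I * (a + q)) / 2))).arg ∉ Set.Ioc (-π) π))
    (K : ℝ)
    (hK1 : |a| ≥ |q| → a ≠ 0 → K = q / a)
    (hK2 : |q| ≥ |a| → q ≠ 0 → K = a / q)
    (hK3 : a = 0 → q = 0 → K = -1) :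
    (F1 ∨ F2 ∨ F3) ↔
      (p < -(b * K) ∨ ((a < -|q| ∨ q > |a|) ∧ p = -(b * K))) := by
  rw [hF1, hF2, hF3]
  have e1 : ((p : ℂ) + b + Complex.I * (a - q)) / 2 = ⟨(p + b) / 2, (a - q) / 2⟩ := by
    rw [Complex.mk_eq_add_mul_I]; push_cast; ring
  have e2 : ((p : ℂ) - b + Complex.I * (a + q)) / 2 = ⟨(p - b) / 2, (a + q) / 2⟩ := by
    rw [Complex.mk_eq_add_mul_I]; push_cast; ring
  rw [e2] at hY
  rw [e1, e2]
  exact aux_main_s10 p q a b _ _ _ rfl rfl rfl rfl rfl (by simp [neg_div]; try ring) (Complex.arg_conj _) hY K hK1 hK2 hK3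
end

section
/- For every complex number p and every natural number m with m ≥ 1, ∫₀^{π} exp(p·cos x)·cos(p·sin x)·cos(m·x) dx = π·p^m/(2·m!). -/
open scoped Real

theorem aux_cos (k : ℤ) : (∫ x : ℝ in (0:ℝ)..π, Real.cos (k * x)) = if k = 0 then π else 0 := by
  split_ifs with h
  · simp [h]
  · have hk : (k:ℝ) ≠ 0 := by exact_mod_cast h
    rw [intervalIntegral.integral_comp_mul_left (fun x => Real.cos x) hk, integral_cos]
    simp [Real.sin_int_mul_pi]

theorem aux_orth_s13 (n m : ℕ) (hm : 1 ≤ m) :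
    (∫ x : ℝ in (0:ℝ)..π, Real.cos (n * x) * Real.cos (m * x)) = if n = m then π / 2 else 0 := by
  have h : ∀ x : ℝ, Real.cos (n * x) * Real.cos (m * x) =
      (Real.cos (((n - m : ℤ) : ℝ) * x) + Real.cos (((n + m : ℤ) : ℝ) * x)) / 2 := by
    intro x
    push_cast
    rw [sub_mul, add_mul, Real.cos_sub, Real.cos_add]
    ring
  simp_rw [h]
  rw [intervalIntegral.integral_div, intervalIntegral.integral_add, aux_cos, aux_cos]
  · have h2 : ¬ ((n:ℤ) + m = 0) := by omega
    rw [if_neg h2]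
    by_cases hnm : n = m
    · simp [hnm]
    · have : ¬ ((n:ℤ) - m = 0) := by omega
      simp [hnm, this]
  all_goals exact Continuous.intervalIntegrable (by fun_prop) _ _

theorem aux_sum (p : ℂ) (x : ℝ) :
    HasSum (fun n : ℕ => p ^ n / (n.factorial : ℂ) * (Real.cos (n * x) : ℂ))
      (Complex.exp (p * Complex.cos x) * Complex.cos (p * Complex.sin x)) := by
  have e : ∀ z : ℂ, HasSum (fun n : ℕ => z ^ n / (n.factorial : ℂ)) (Complex.exp z) := by
    intro z
    rw [Complex.exp_eq_exp_ℂ]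
    exact NormedSpace.expSeries_div_hasSum_exp z
  have h := ((e (p * Complex.exp (x * Complex.I))).add
    (e (p * Complex.exp (-x * Complex.I)))).div_const 2
  convert h using 1
  · rfl
  · funext n
    push_cast
    rw [Complex.cos, mul_pow, mul_pow, ← Complex.exp_nat_mul, ← Complex.exp_nat_mul]
    ring_nf
  · rw [Complex.exp_mul_I, Complex.exp_mul_I, Complex.cos_neg, Complex.sin_neg,
      show Complex.cos (p * Complex.sin x) = (Complex.exp (p * Complex.sin x * Complex.I) +
        Complex.exp (-(p * Complex.sin x) * Complex.I)) / 2 from rfl,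
      mul_div_assoc', mul_add, ← Complex.exp_add, ← Complex.exp_add]
    ring_nf

theorem gr_3932_2 (p : ℂ) (m : ℕ) (hm : 1 ≤ m) :
    (∫ x : ℝ in (0:ℝ)..π,
        Complex.exp (p * Complex.cos x) * Complex.cos (p * Complex.sin x) *
          (Real.cos (m * x) : ℂ)) =
      (π : ℂ) * p ^ m / (2 * (m.factorial : ℂ)) := by
  have H := intervalIntegral.hasSum_integral_of_dominated_convergence
    (μ := MeasureTheory.volume) (a := 0) (b := π)
    (F := fun (n : ℕ) (x : ℝ) => p ^ n / (n.factorial : ℂ) * (Real.cos (n * x) : ℂ) *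
      (Real.cos (m * x) : ℂ))
    (f := fun x : ℝ => Complex.exp (p * Complex.cos x) * Complex.cos (p * Complex.sin x) *
          (Real.cos (m * x) : ℂ))
    (fun n _ => ‖p‖ ^ n / (n.factorial : ℝ))
    (fun n => Continuous.aestronglyMeasurable (by fun_prop))
    (fun n => Filter.Eventually.of_forall fun x _ => by
      rw [norm_mul, norm_mul, norm_div, norm_pow, Complex.norm_natCast, Complex.norm_real,
        Complex.norm_real, mul_assoc]
      refine mul_le_of_le_one_right (by positivity) ?_
      exact mul_le_one₀ (Real.abs_cos_le_one _) (norm_nonneg _) (Real.abs_cos_le_one _))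
    (Filter.Eventually.of_forall fun x _ => Real.summable_pow_div_factorial _)
    (by simp)
    (Filter.Eventually.of_forall fun x _ => (aux_sum p x).mul_right _)
  refine H.unique ?_
  have h2 : ∀ n : ℕ, (∫ x : ℝ in (0:ℝ)..π, p ^ n / (n.factorial : ℂ) * (Real.cos (n * x) : ℂ) *
      (Real.cos (m * x) : ℂ)) = if n = m then (π : ℂ) * p ^ m / (2 * (m.factorial : ℂ)) else 0 := by
    intro n
    simp_rw [mul_assoc, ← Complex.ofReal_mul]
    rw [intervalIntegral.integral_const_mul, intervalIntegral.integral_ofReal, aux_orth_s13 n m hm]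
    split_ifs with h
    · subst h
      push_cast
      field_simp
    · simp
  simp_rw [h2]
  exact hasSum_ite_eq m _
end

section
/- For every complex number p and every natural number m, ∫₀^{2π} exp(p·sin x)·cos(p·cos x + m·x) dx = (2π·p^m/m!)·cos(m·π/2). In particular, no positivity restriction on p is needed. -/
open scoped Real

lemma aux_one (a : ℂ) (m : ℕ) :
    (∫ x : ℝ in (0:ℝ)..(2 * π),
      Complex.exp (a * Complex.exp (x * Complex.I)) * Complex.exp (-(m * (x * Complex.I)))) =
      2 * (π : ℂ) * a ^ m / (m.factorial : ℂ) := by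
  have hd : DiffContOnCl ℂ (fun z : ℂ => Complex.exp (a * z)) (Metric.ball 0 1) := by
    apply Differentiable.diffContOnCl
    fun_prop
  have h := hd.circleIntegral_one_div_sub_center_pow_smul one_pos m
  rw [iteratedDeriv_cexp_const_mul, circleIntegral] at h
  have h2 : ∀ x : ℝ, deriv (circleMap 0 1) x • ((1 / (circleMap 0 1 x - 0) ^ (m + 1)) •
      Complex.exp (a * circleMap 0 1 x)) = Complex.I *
      (Complex.exp (a * Complex.exp (x * Complex.I)) *
        Complex.exp (-(m * (x * Complex.I)))) := by
    intro x
    have h0 := Complex.exp_ne_zero (x * Complex.I)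
    rw [Complex.exp_neg, Complex.exp_nat_mul, deriv_circleMap]
    simp only [circleMap, smul_eq_mul, Complex.ofReal_one, one_mul, zero_add, sub_zero]
    field_simp
    ring
  simp only [h2] at h
  rw [intervalIntegral.integral_const_mul] at h
  apply mul_left_cancel₀ Complex.I_ne_zero
  rw [h]
  simp only [smul_eq_mul, mul_zero, Complex.exp_zero]
  ring

lemma aux_two (a : ℂ) (m : ℕ) :
    (∫ x : ℝ in (0:ℝ)..(2 * π),
      Complex.exp (a * Complex.exp (-(x * Complex.I))) * Complex.exp (m * (x * Complex.I))) =
      2 * (π : ℂ) * a ^ m / (m.factorial : ℂ) := by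
  rw [← aux_one]
  have h := intervalIntegral.integral_comp_sub_left (a := 0) (b := 2 * π) (fun x : ℝ =>
    Complex.exp (a * Complex.exp (x * Complex.I)) * Complex.exp (-(m * (x * Complex.I)))) (2 * π)
  rw [sub_self, sub_zero] at h
  rw [← h]
  congr 1
  ext x
  have e1 : Complex.exp (((2 * π - x : ℝ) : ℂ) * Complex.I) = Complex.exp (-(x * Complex.I)) := by
    rw [show ((2 * π - x : ℝ) : ℂ) * Complex.I = -(x * Complex.I) + 2 * π * Complex.I by
      push_cast; ring, Complex.exp_periodic]
  rw [Complex.exp_neg ((m : ℂ) * _), Complex.exp_nat_mul _ m, Complex.exp_nat_mul _ m, e1,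
    Complex.exp_neg, inv_pow, inv_inv]

theorem gr_3936_3_extended (p : ℂ) (m : ℕ) :
    (∫ x : ℝ in (0:ℝ)..(2 * π),
        Complex.exp (p * Complex.sin x) * Complex.cos (p * Complex.cos x + m * x)) =
      2 * (π : ℂ) * p ^ m / (m.factorial : ℂ) * (Real.cos (m * π / 2) : ℂ) := by
  have key : ∀ x : ℝ,
      Complex.exp (p * Complex.sin x) * Complex.cos (p * Complex.cos x + m * x) =
      (1 / 2) * (Complex.exp ((p * Complex.I) * Complex.exp (-(x * Complex.I))) *
          Complex.exp (m * (x * Complex.I)) +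
        Complex.exp ((p * -Complex.I) * Complex.exp (x * Complex.I)) *
          Complex.exp (-(m * (x * Complex.I)))) := by
    intro x
    rw [Complex.cos.eq_1 (_ + _), ← neg_mul (x : ℂ), Complex.exp_mul_I (x : ℂ),
      Complex.exp_mul_I (-(x : ℂ)), Complex.cos_neg, Complex.sin_neg, ← Complex.exp_add,
      ← Complex.exp_add, ← mul_div_assoc, mul_add, ← Complex.exp_add, ← Complex.exp_add,
      div_eq_mul_inv, mul_comm, one_div]
    congr 3
    · linear_combination (p * Complex.sin x) * Complex.I_sq
    · linear_combination (p * Complex.sin x) * Complex.I_sq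
  simp only [key]
  rw [intervalIntegral.integral_const_mul, intervalIntegral.integral_add, aux_one, aux_two]
  · have hc : (Real.cos (m * π / 2) : ℂ) = (Complex.I ^ m + (-Complex.I) ^ m) / 2 := by
      rw [Complex.ofReal_cos, Complex.cos.eq_1]
      congr 2
      · rw [← congrArg (· ^ m) Complex.exp_pi_div_two_mul_I]
        beta_reduce
        rw [← Complex.exp_nat_mul]
        congr 1; push_cast; ring
      · rw [← Complex.exp_neg_pi_div_two_mul_I, ← Complex.exp_nat_mul]
        congr 1; push_cast; ring
    rw [hc, mul_pow, mul_pow]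
    ring
  · exact Continuous.intervalIntegrable (by fun_prop) _ _
  · exact Continuous.intervalIntegrable (by fun_prop) _ _
end
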